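/- Replica (multi-copy observable) expression for the stabilizer Rényi quantity: for every natural number n, every integer α ≥ 1, and every unit vector ψ : (Fin n → Fin 2) → ℂ, letting Ψ : (Fin (2*α) → Fin n → Fin 2) → ℂ be the 2α-fold tensor power Ψ f = ∏_{m : Fin (2*α)} ψ (f m), one has Re( d⁻¹ · Σ over all s : Fin n → Fin 4 of ⟨Ψ, P_s^{⊗2α} Ψ⟩ ) = A_α(ψ), where P_s^{⊗2α} is the matrix indexed by (Fin (2*α) → Fin n → Fin 2) with entries P_s^{⊗2α} f g = ∏_{m : Fin (2*α)} P_s (f m) (g m), ⟨Ψ, M Ψ⟩ = star Ψ ⬝ᵥ M.mulVec Ψ, and d = 2^n. -/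

import Mathlib

open Complex Matrix BigOperators

/-- The single-qubit Pauli matrices `Q₀ = 1`, `Q₁ = X`, `Q₂ = Y`, `Q₃ = Z`. -/
noncomputable def Q : Fin 4 → Matrix (Fin 2) (Fin 2) ℂ :=
  ![1, !![0, 1; 1, 0], !![0, -Complex.I; Complex.I, 0], !![1, 0; 0, -1]]

/-- The `n`-qubit Pauli string `P_s`, the Kronecker product of the `Q (s k)`. -/
noncomputable def P {n : ℕ} (s : Fin n → Fin 4) :
    Matrix (Fin n → Fin 2) (Fin n → Fin 2) ℂ :=
  Matrix.of fun i j => ∏ k, Q (s k) (i k) (j k)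


/-- `A_α(ψ) = d⁻¹ ∑_s ⟨ψ, P_s ψ⟩^(2α)` with `d = 2^n`. -/
noncomputable def A (n α : ℕ) (ψ : (Fin n → Fin 2) → ℂ) : ℝ :=
  (2 ^ n : ℝ)⁻¹ * ∑ s : Fin n → Fin 4, (star ψ ⬝ᵥ (P s).mulVec ψ).re ^ (2 * α)

lemma Q_herm (a : Fin 4) (i j : Fin 2) : star (Q a i j) = Q a j i := by
  fin_cases a <;> fin_cases i <;> fin_cases j <;> simp [Q]

lemma P_herm {n : ℕ} (s : Fin n → Fin 4) : (P s).IsHermitian := by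
  ext i j
  simp only [P, Matrix.conjTranspose_apply, Matrix.of_apply, star_prod, Q_herm]

lemma exp_real {n : ℕ} (s : Fin n → Fin 4) (ψ : (Fin n → Fin 2) → ℂ) :
    (((star ψ ⬝ᵥ (P s).mulVec ψ).re : ℝ) : ℂ) = star ψ ⬝ᵥ (P s).mulVec ψ := by
  have h : star (star ψ ⬝ᵥ (P s).mulVec ψ) = star ψ ⬝ᵥ (P s).mulVec ψ := by
    have h2 := Matrix.star_dotProduct ψ ((P s).mulVec ψ)
    rw [Matrix.star_mulVec, (P_herm s).eq, ← Matrix.dotProduct_mulVec] at h2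
    exact h2.symm
  exact Complex.conj_eq_iff_re.mp h

lemma replica_pow {ι : Type*} [Fintype ι] [DecidableEq ι] (N : ℕ) (M : Matrix ι ι ℂ)
    (ψ : ι → ℂ) :
    (star fun f : Fin N → ι => ∏ m, ψ (f m)) ⬝ᵥ
      (Matrix.of fun f g : Fin N → ι => ∏ m, M (f m) (g m)).mulVec (fun f => ∏ m, ψ (f m))
      = (star ψ ⬝ᵥ M.mulVec ψ) ^ N := by
  have h1 : ∀ f : Fin N → ι,
      (Matrix.of fun f g : Fin N → ι => ∏ m, M (f m) (g m)).mulVec (fun f => ∏ m, ψ (f m)) f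
        = ∏ m, M.mulVec ψ (f m) := by
    intro f
    simp only [Matrix.mulVec, dotProduct, Matrix.of_apply, ← Finset.prod_mul_distrib]
    rw [Finset.prod_univ_sum, Fintype.piFinset_univ]
  rw [dotProduct]
  simp only [h1, Pi.star_apply, star_prod, ← Finset.prod_mul_distrib]
  rw [dotProduct, ← Fin.prod_const, Finset.prod_univ_sum, Fintype.piFinset_univ]
  rfl

theorem replica_expression (n α : ℕ) (hα : 1 ≤ α) (ψ : (Fin n → Fin 2) → ℂ)
    (hψ : star ψ ⬝ᵥ ψ = 1) :
    ((2 ^ n : ℂ)⁻¹ * ∑ s : Fin n → Fin 4,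
        (star fun f : Fin (2 * α) → Fin n → Fin 2 => ∏ m, ψ (f m)) ⬝ᵥ
          (Matrix.of fun f g : Fin (2 * α) → Fin n → Fin 2 =>
            ∏ m, P s (f m) (g m)).mulVec
          (fun f => ∏ m, ψ (f m))).re
      = A n α ψ := by
  simp only [replica_pow, A]
  have h : ((2 ^ n : ℂ)⁻¹ * ∑ s : Fin n → Fin 4, (star ψ ⬝ᵥ (P s).mulVec ψ) ^ (2 * α))
      = (((2 ^ n : ℝ)⁻¹ * ∑ s : Fin n → Fin 4,
        (star ψ ⬝ᵥ (P s).mulVec ψ).re ^ (2 * α) : ℝ) : ℂ) := by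
    push_cast
    simp only [exp_real]
  rw [h, Complex.ofReal_re]
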